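/- Let 0 < μ < 2, ε ∈ [1 − μ²/4, 2 − μ], G₀ > 0, M ≥ 0, K > 0. Define λ(η) = (1 − μ/2)⁻¹·((1 − ε)/η + η − μ), G(λ) = ((1 − λ/2)·G₀ + λ·(G₀/μ + M))², Ψ(η) = (η² + 1)·λ(η)² + η³/λ(η), and Φ(η) = (1 + λ(η)³)·η²·G(λ(η)) + K·Ψ(η). Set η₃ = (μ + √(μ² − 4(1 − ε)))/2. Then η₃ < 1 when ε < 2 − μ, and Φ is convex on the open interval (η₃, 1). -/

import Mathlib

/-- The weighting coefficient `λ(η)` obtained from the consistency constraint. -/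
noncomputable def lamFn (μ ε η : ℝ) : ℝ :=
  (1 - μ / 2)⁻¹ * ((1 - ε) / η + η - μ)

/-- `G(λ) = ((1 − λ/2)G₀ + λ(G₀/μ + M))²`. -/
noncomputable def GFn (G₀ M μ lam : ℝ) : ℝ :=
  ((1 - lam / 2) * G₀ + lam * (G₀ / μ + M)) ^ 2

/-- `Ψ(η) = (η² + 1)λ(η)² + η³/λ(η)`. -/
noncomputable def PsiFn (μ ε η : ℝ) : ℝ :=
  (η ^ 2 + 1) * (lamFn μ ε η) ^ 2 + η ^ 3 / lamFn μ ε η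

/-- The convergence-bias objective `Φ(η) = (1 + λ(η)³)·η²·G(λ(η)) + K·Ψ(η)`. -/
noncomputable def PhiFn (μ ε G₀ M K η : ℝ) : ℝ :=
  (1 + (lamFn μ ε η) ^ 3) * η ^ 2 * GFn G₀ M μ (lamFn μ ε η) + K * PsiFn μ ε η

/-- A sign condition on a quadratic form in `η * q'(η)` and `q(η)`, where
`q(η) = η² - μη + c`, makes `q ^ m * η ^ n` convex wherever `q` and `η` are positive. -/
lemma convexOn_quadratic_zpow_mul_zpow (μ c : ℝ) (m n : ℤ) {S : Set ℝ} (hS : Convex ℝ S)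
    (hpos : ∀ η ∈ S, 0 < η) (hq : ∀ η ∈ S, 0 < η ^ 2 - μ * η + c)
    (hform : ∀ η ∈ S,
      0 ≤ m * (m - 1) * (η * (2 * η - μ)) ^ 2
        + 2 * m * n * (η * (2 * η - μ)) * (η ^ 2 - μ * η + c)
        + n * (n - 1) * (η ^ 2 - μ * η + c) ^ 2 + 2 * m * (η ^ 2 - μ * η + c) * η ^ 2) :
    ConvexOn ℝ S (fun η => (η ^ 2 - μ * η + c) ^ m * η ^ n) := by
  have hqd : ∀ η : ℝ, HasDerivAt (fun η => η ^ 2 - μ * η + c) (2 * η - μ) η := by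
    intro η
    simpa using (((hasDerivAt_id η).pow 2).sub ((hasDerivAt_id η).const_mul μ)).add_const c
  have hqz : ∀ η ∈ S, ∀ k : ℤ, HasDerivAt (fun η => (η ^ 2 - μ * η + c) ^ k)
      (k * (η ^ 2 - μ * η + c) ^ (k - 1) * (2 * η - μ)) η := fun η hη k =>
    HasDerivAt.comp (h₂ := fun y : ℝ => y ^ k) η
      (hasDerivAt_zpow k _ (Or.inl (hq η hη).ne')) (hqd η)
  have hz : ∀ η ∈ S, ∀ k : ℤ, HasDerivAt (fun η : ℝ => η ^ k) (k * η ^ (k - 1)) η :=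
    fun η hη k => hasDerivAt_zpow k _ (Or.inl (hpos η hη).ne')
  have hl : ∀ η : ℝ, HasDerivAt (fun η => 2 * η - μ) 2 η := fun η => by
    simpa using ((hasDerivAt_id η).const_mul 2).sub_const μ
  have hd1 := fun η hη => (hqz η hη m).mul (hz η hη n)
  have hd2 := fun η hη =>
    ((((hqz η hη (m - 1)).const_mul (m : ℝ)).mul (hl η)).mul (hz η hη n)).add
      ((hqz η hη m).mul ((hz η hη (n - 1)).const_mul (n : ℝ)))
  refine convexOn_of_hasDerivWithinAt2_nonneg hS
    (fun η hη => (hd1 η hη).continuousAt.continuousWithinAt)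
    (fun η hη => (hd1 η (interior_subset hη)).hasDerivWithinAt)
    (fun η hη => (hd2 η (interior_subset hη)).hasDerivWithinAt) fun η hη => ?_
  have hη := interior_subset hη
  have hη0 := hpos η hη
  have hq0 := hq η hη
  have hf := hform η hη
  simp only [Pi.mul_apply]
  generalize η ^ 2 - μ * η + c = q at *
  have key := mul_nonneg (mul_nonneg (zpow_pos hq0 (m - 1 - 1)).le
    (zpow_pos hη0 (n - 1 - 1)).le) hf
  refine key.trans_eq ?_
  have e1 : ∀ (x : ℝ), x ≠ 0 → ∀ k : ℤ, x ^ k = x ^ (k - 1 - 1) * x ^ 2 := fun x hx k => by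
    rw [← zpow_natCast x 2, ← zpow_add₀ hx]; congr 1; push_cast; ring
  have e2 : ∀ (x : ℝ), x ≠ 0 → ∀ k : ℤ, x ^ (k - 1) = x ^ (k - 1 - 1) * x := fun x hx k => by
    rw [← zpow_add_one₀ hx]; congr 1; ring
  rw [e1 q hq0.ne' m, e2 q hq0.ne' m, e1 η hη0.ne' n, e2 η hη0.ne' n]
  push_cast
  ring

/-- Past the larger root of `η² - μη + c`, the variable and the quadratic are positive. -/
lemma quadratic_pos_of_root_lt {μ c η : ℝ} (hμ : 0 < μ) (hc : c ≤ μ ^ 2 / 4)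
    (hη : (μ + Real.sqrt (μ ^ 2 - 4 * c)) / 2 < η) : 0 < η ∧ 0 < η ^ 2 - μ * η + c := by
  have h0 := Real.sqrt_nonneg (μ ^ 2 - 4 * c)
  have h1 := Real.sq_sqrt (show 0 ≤ μ ^ 2 - 4 * c by linarith)
  exact ⟨by linarith, by nlinarith⟩

/-- Theorem 5, Ω₁ part: with `η₃ = (μ + √(μ² − 4(1 − ε)))/2`, for `μ ∈ (0,2)`,
`ε ∈ [1 − μ²/4, 2 − μ]`, `G₀ > 0`, `M ≥ 0`, `K > 0`: `η₃ < 1` when `ε < 2 − μ`, and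
`Φ` is convex on `(η₃, 1)`. -/
theorem stmt15 (μ ε G₀ M K : ℝ) (hμ0 : 0 < μ) (hμ2 : μ < 2)
    (hε1 : 1 - μ ^ 2 / 4 ≤ ε) (hε2 : ε ≤ 2 - μ) (hG : 0 < G₀) (hM : 0 ≤ M) (hK : 0 < K) :
    (ε < 2 - μ → (μ + Real.sqrt (μ ^ 2 - 4 * (1 - ε))) / 2 < 1) ∧
    ConvexOn ℝ (Set.Ioo ((μ + Real.sqrt (μ ^ 2 - 4 * (1 - ε))) / 2) 1)
      (PhiFn μ ε G₀ M K) := by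
  refine ⟨fun h => ?_, ?_⟩
  · have : Real.sqrt (μ ^ 2 - 4 * (1 - ε)) < 2 - μ := by
      rw [Real.sqrt_lt' (by linarith)]
      nlinarith
    linarith
  obtain ⟨c, hc⟩ : ∃ c, c = 1 - ε := ⟨_, rfl⟩
  rw [← hc]
  have hcμ : c ≤ μ ^ 2 / 4 := by linarith
  set S := Set.Ioo ((μ + Real.sqrt (μ ^ 2 - 4 * c)) / 2) 1
  have hroot : ∀ η ∈ S, 0 < η ∧ 0 < η ^ 2 - μ * η + c := fun η hη =>
    quadratic_pos_of_root_lt hμ0 hcμ hη.1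
  have hhalf : ∀ η ∈ S, μ / 2 < η := fun η hη => by
    have := Real.sqrt_nonneg (μ ^ 2 - 4 * c)
    linarith [hη.1]
  have conv := fun m n => convexOn_quadratic_zpow_mul_zpow μ c m n (convex_Ioo _ _ : Convex ℝ S)
    (fun η hη => (hroot η hη).1) (fun η hη => (hroot η hη).2)
  have h02 := conv 0 2 fun η hη => by
    have := sq_nonneg (η ^ 2 - μ * η + c)
    push_cast; linarith
  have h11 := conv 1 1 fun η hη => by
    obtain ⟨h1, h2⟩ := hroot η hη
    have h3 : 0 < 2 * η - μ := by linarith [hhalf η hη]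
    have : 0 ≤ (η ^ 2 - μ * η + c) * (η * (2 * η - μ) + η ^ 2) := by positivity
    push_cast; linarith
  have h20 := conv 2 0 fun η hη => by
    obtain ⟨h1, h2⟩ := hroot η hη
    push_cast
    have : 0 ≤ (η ^ 2 - μ * η + c) * η ^ 2 := by positivity
    nlinarith [sq_nonneg (η * (2 * η - μ))]
  have h31 := conv 3 (-1) fun η hη => by
    obtain ⟨h1, h2⟩ := hroot η hη
    push_cast
    have : 0 ≤ (η ^ 2 - μ * η + c) * η ^ 2 := by positivity
    generalize η * (2 * η - μ) = x at *
    generalize η ^ 2 - μ * η + c = y at *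
    nlinarith [sq_nonneg (2 * x - y), sq_nonneg y]
  have h42 := conv 4 (-2) fun η hη => by
    obtain ⟨h1, h2⟩ := hroot η hη
    push_cast
    have : 0 ≤ (η ^ 2 - μ * η + c) * η ^ 2 := by positivity
    generalize η * (2 * η - μ) = x at *
    generalize η ^ 2 - μ * η + c = y at *
    nlinarith [sq_nonneg (3 * x - 2 * y), sq_nonneg y]
  have h53 := conv 5 (-3) fun η hη => by
    obtain ⟨h1, h2⟩ := hroot η hη
    push_cast
    have : 0 ≤ (η ^ 2 - μ * η + c) * η ^ 2 := by positivity
    generalize η * (2 * η - μ) = x at *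
    generalize η ^ 2 - μ * η + c = y at *
    nlinarith [sq_nonneg (4 * x - 3 * y), sq_nonneg y]
  have h22 := conv 2 (-2) fun η hη => by
    obtain ⟨h1, h2⟩ := hroot η hη
    push_cast
    rcases le_total 0 c with h | h
    · nlinarith [sq_nonneg (η ^ 2 - c), mul_nonneg h h2.le]
    · nlinarith [sq_nonneg (η ^ 2), sq_nonneg c, mul_nonneg (neg_nonneg.2 h) (mul_pos hμ0 h1).le]
  have h14 := conv (-1) 4 fun η hη => by
    obtain ⟨h1, h2⟩ := hroot η hη
    have h3 : 0 ≤ η ^ 2 * ((2 * η - μ) ^ 2 - 3 * (η ^ 2 - μ * η + c)) :=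
      mul_nonneg (sq_nonneg η) (by nlinarith)
    push_cast
    nlinarith [sq_nonneg (3 * (η ^ 2 - μ * η + c) - η * (2 * η - μ))]
  have ht : 0 < (1 - μ / 2)⁻¹ := inv_pos.2 (by linarith)
  have hP : 0 ≤ G₀ / μ + M - G₀ / 2 := by
    have : G₀ / 2 ≤ G₀ / μ := div_le_div_of_nonneg_left hG.le hμ0 hμ2.le
    linarith
  obtain ⟨P, hPdef⟩ : ∃ P, P = G₀ / μ + M - G₀ / 2 := ⟨_, rfl⟩
  rw [← hPdef] at hP
  obtain ⟨t, htdef⟩ : ∃ t, t = (1 - μ / 2)⁻¹ := ⟨_, rfl⟩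
  rw [← htdef] at ht
  have hsum := (((((((h02.smul (c := G₀ ^ 2) (by positivity)).add
    (h11.smul (c := 2 * G₀ * P * t) (by positivity))).add
    (h20.smul (c := P ^ 2 * t ^ 2 + K * t ^ 2) (by positivity))).add
    (h31.smul (c := G₀ ^ 2 * t ^ 3) (by positivity))).add
    (h42.smul (c := 2 * G₀ * P * t ^ 4) (by positivity))).add
    (h53.smul (c := P ^ 2 * t ^ 5) (by positivity))).add
    (h22.smul (c := K * t ^ 2) (by positivity))).add
    (h14.smul (c := K * t⁻¹) (by positivity))
  refine hsum.congr fun η hη => ?_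
  obtain ⟨h1, h2⟩ := hroot η hη
  have hlam : lamFn μ ε η = t * ((η ^ 2 - μ * η + c) / η) := by
    rw [lamFn, ← htdef, ← hc]
    field_simp
    ring
  have hGlam : ∀ l, GFn G₀ M μ l = (G₀ + l * P) ^ 2 := fun l => by
    rw [GFn, hPdef]; ring
  simp only [PhiFn, PsiFn, hGlam, hlam, Pi.add_apply, smul_eq_mul]
  generalize η ^ 2 - μ * η + c = q at *
  simp only [zpow_neg, zpow_ofNat]
  field_simp
  ring
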